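/- If (ǎ,p̌,V̌) is optimal for problem P2, then (p̌,V̌) solves the system p = y(p,V) ∧ l and V = Ǧ₊(p,V); moreover p̌ ≤ p̲, where p̲ is the minimal fixpoint of F_𝟘 in [0,l] (𝟘 = (0,…,0)); and if yʲ(p̌,V̌) ≠ lʲ for every j, then p̌ = p̲. -/

import Mathlib

open Matrix

lemma mulVec_mono_aux {N : ℕ} (A : Matrix (Fin N) (Fin N) ℝ) (hA : ∀ i j, 0 ≤ A i j)
    (u w : Fin N → ℝ) (h : ∀ i, u i ≤ w i) (i : Fin N) : A.mulVec u i ≤ A.mulVec w i := by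
  simp only [Matrix.mulVec, dotProduct]
  exact Finset.sum_le_sum fun j _ => mul_le_mul_of_nonneg_left (h j) (hA i j)

/-- Componentwise smaller with at least the same weighted sum means equal. -/
lemma eq_of_weighted_aux {N : ℕ} (f₁ f₂ f₃ a p V a' p' V' : Fin N → ℝ)
    (hf₁ : ∀ i, 0 < f₁ i) (hf₂ : ∀ i, 0 < f₂ i) (hf₃ : ∀ i, 0 < f₃ i)
    (ha : ∀ i, a' i ≤ a i) (hp : ∀ i, p' i ≤ p i) (hV : ∀ i, V' i ≤ V i)
    (h : ∑ i, (f₁ i * a i + f₂ i * p i + f₃ i * V i) ≤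
      ∑ i, (f₁ i * a' i + f₂ i * p' i + f₃ i * V' i)) (i : Fin N) :
    a' i = a i ∧ p' i = p i ∧ V' i = V i := by
  have h1 := fun i => mul_le_mul_of_nonneg_left (ha i) (hf₁ i).le
  have h2 := fun i => mul_le_mul_of_nonneg_left (hp i) (hf₂ i).le
  have h3 := fun i => mul_le_mul_of_nonneg_left (hV i) (hf₃ i).le
  have hle : ∀ i ∈ Finset.univ, f₁ i * a' i + f₂ i * p' i + f₃ i * V' i ≤
      f₁ i * a i + f₂ i * p i + f₃ i * V i := fun i _ => by linarith [h1 i, h2 i, h3 i]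
  have heq := (Finset.sum_eq_sum_iff_of_le hle).1 (le_antisymm (Finset.sum_le_sum hle) h) i
    (Finset.mem_univ i)
  refine ⟨mul_left_cancel₀ (hf₁ i).ne' ?_, mul_left_cancel₀ (hf₂ i).ne' ?_,
    mul_left_cancel₀ (hf₃ i).ne' ?_⟩ <;> linarith [h1 i, h2 i, h3 i]

/-- If `(ǎ,p̌,V̌)` is optimal for problem P2, then `(p̌,V̌)` solves the
system `p = y(p,V) ∧ l`, `V = Ǧ₊(p,V)` where `Ǧ₊(p,V) := (x(p,V) − l)⁺ ∘ 1_{y(p,V)>l}`;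
moreover `p̌ ≤ p̲`, where `p̲` is the minimal fixpoint of `F_𝟘` in `[0,l]`; and if
`yʲ(p̌,V̌) ≠ lʲ` for every `j`, then `p̌ = p̲`. -/
theorem stmt15 (N : ℕ) (hN : 1 < N)
    (e l : Fin N → ℝ) (he : 0 ≤ e) (hl : 0 ≤ l)
    (P Th : Matrix (Fin N) (Fin N) ℝ)
    (hP : ∀ i j, 0 ≤ P i j) (hProw : ∀ i, ∑ j, P i j = 1)
    (hTh : ∀ i j, 0 ≤ Th i j) (hThrow : ∀ i, ∑ j, Th i j ≤ 1)
    (α β γ : ℝ) (hα : α ∈ Set.Icc (0:ℝ) 1) (hβ : β ∈ Set.Icc (0:ℝ) 1)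
    (hγ : γ ∈ Set.Icc (0:ℝ) 1)
    (hInv : IsUnit (1 - Th.transpose))
    (hInvNonneg : ∀ i j, 0 ≤ (1 - Th.transpose)⁻¹ i j)
    (K : Fin N → ℝ)
    (hK : K = (1 - Th.transpose)⁻¹.mulVec
      (fun i => max (e i + P.transpose.mulVec l i - l i) 0))
    (κ : ℝ) (hκ : κ = ⨆ i, K i)
    (κ₁ : ℝ) (hκ₁ : κ₁ = ⨆ i,
      (e i + P.transpose.mulVec l i + κ * Th.transpose.mulVec (fun _ => (1:ℝ)) i))
    (f₁ f₂ f₃ : Fin N → ℝ)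
    (hf₁ : ∀ i, 0 < f₁ i) (hf₂ : ∀ i, 0 < f₂ i) (hf₃ : ∀ i, 0 < f₃ i)
    (f : (Fin N → ℝ) → (Fin N → ℝ) → (Fin N → ℝ) → ℝ)
    (hf : f = fun a p V => ∑ i, (f₁ i * a i + f₂ i * p i + f₃ i * V i))
    (Adm2 : (Fin N → ℝ) → (Fin N → ℝ) → (Fin N → ℝ) → Prop)
    (hAdm2 : ∀ a p V : Fin N → ℝ, Adm2 a p V ↔
      ((∀ i, a i = 0 ∨ a i = 1) ∧ p ∈ Set.Icc (0 : Fin N → ℝ) l ∧ 0 ≤ V ∧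
      (∀ i, α * e i + β * P.transpose.mulVec p i + γ * Th.transpose.mulVec V i
        - κ₁ * a i ≤ p i) ∧
      (∀ i, a i * l i ≤ p i) ∧
      (∀ i, α * e i + β * P.transpose.mulVec p i + γ * Th.transpose.mulVec V i
        ≤ (1 - a i) * l i + κ₁ * a i) ∧
      (∀ i, e i + P.transpose.mulVec p i + Th.transpose.mulVec V i - l i
        - κ * (1 - a i) ≤ V i)))
    (acheck pcheck Vcheck : Fin N → ℝ)
    (hAdm : Adm2 acheck pcheck Vcheck)
    (hOpt : ∀ a p V : Fin N → ℝ, Adm2 a p V → f acheck pcheck Vcheck ≤ f a p V)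
    (Gp : (Fin N → ℝ) → (Fin N → ℝ) → Fin N → ℝ)
    (hGp : Gp = fun u V i =>
      max (e i + P.transpose.mulVec u i + Th.transpose.mulVec V i - l i) 0 *
        (if u i = l i then (1 : ℝ) else 0))
    (H : (Fin N → ℝ) → Fin N → ℝ)
    (hH : ∀ u ∈ Set.Icc (0 : Fin N → ℝ) l,
      H u = Gp u (H u) ∧ ∀ W : Fin N → ℝ, W = Gp u W → W = H u)
    (F : (Fin N → Bool) → (Fin N → ℝ) → Fin N → ℝ)
    (hF : F = fun b p i =>
      let V := H p
      let xi := e i + P.transpose.mulVec p i + Th.transpose.mulVec V i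
      let yi := α * e i + β * P.transpose.mulVec p i + γ * Th.transpose.mulVec V i
      let di : ℝ := if xi < l i then 1 else 0
      if b i then yi * di + l i * (1 - di) else min yi (l i))
    (plow : Fin N → ℝ)
    -- `plow` is the minimal fixpoint of `F_𝟘` in `[0,l]`
    (hplow : plow ∈ Set.Icc (0 : Fin N → ℝ) l ∧ plow = F (fun _ => false) plow ∧
      ∀ q ∈ Set.Icc (0 : Fin N → ℝ) l, q = F (fun _ => false) q → plow ≤ q) :
    (pcheck = fun j =>
      min (α * e j + β * P.transpose.mulVec pcheck j
        + γ * Th.transpose.mulVec Vcheck j) (l j)) ∧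
    (Vcheck = fun j =>
      max (e j + P.transpose.mulVec pcheck j + Th.transpose.mulVec Vcheck j - l j) 0 *
        (if l j < α * e j + β * P.transpose.mulVec pcheck j
          + γ * Th.transpose.mulVec Vcheck j then (1 : ℝ) else 0)) ∧
    pcheck ≤ plow ∧
    ((∀ j, α * e j + β * P.transpose.mulVec pcheck j
        + γ * Th.transpose.mulVec Vcheck j ≠ l j) → pcheck = plow) := by
  have hPT : ∀ i j, 0 ≤ P.transpose i j := fun i j => hP j i
  have hTT : ∀ i j, 0 ≤ Th.transpose i j := fun i j => hTh j i
  have mP := mulVec_mono_aux P.transpose hPT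
  have mT := mulVec_mono_aux Th.transpose hTT
  obtain ⟨hα0, hα1⟩ := hα
  obtain ⟨hβ0, hβ1⟩ := hβ
  obtain ⟨hγ0, hγ1⟩ := hγ
  obtain ⟨x, hx⟩ : ∃ x : (Fin N → ℝ) → (Fin N → ℝ) → Fin N → ℝ, ∀ p V i, e i + P.transpose.mulVec p i + Th.transpose.mulVec V i = x p V i :=
    ⟨_, fun _ _ _ => rfl⟩
  obtain ⟨y, hy⟩ : ∃ y : (Fin N → ℝ) → (Fin N → ℝ) → Fin N → ℝ, ∀ p V i,
      α * e i + β * P.transpose.mulVec p i + γ * Th.transpose.mulVec V i = y p V i :=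
    ⟨_, fun _ _ _ => rfl⟩
  have mx : ∀ p V q W : Fin N → ℝ, (∀ i, p i ≤ q i) → (∀ i, V i ≤ W i) →
      ∀ i, x p V i ≤ x q W i := by
    intro p V q W h1 h2 i
    rw [← hx, ← hx]
    linarith [mP p q h1 i, mT V W h2 i]
  have my : ∀ p V q W : Fin N → ℝ, (∀ i, p i ≤ q i) → (∀ i, V i ≤ W i) →
      ∀ i, y p V i ≤ y q W i := by
    intro p V q W h1 h2 i
    rw [← hy, ← hy]
    linarith [mul_le_mul_of_nonneg_left (mP p q h1 i) hβ0,
      mul_le_mul_of_nonneg_left (mT V W h2 i) hγ0]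
  have y0 : ∀ p V : Fin N → ℝ, (∀ i, 0 ≤ p i) → (∀ i, 0 ≤ V i) → ∀ i, 0 ≤ y p V i := by
    intro p V h1 h2 i
    refine le_trans ?_ (my 0 0 p V h1 h2 i)
    rw [← hy]
    simpa using mul_nonneg hα0 (he i)
  -- the bound K
  have hdet : IsUnit (1 - Th.transpose).det := (Matrix.isUnit_iff_isUnit_det _).1 hInv
  have hKeq : ∀ i, K i - Th.transpose.mulVec K i =
      max (e i + P.transpose.mulVec l i - l i) 0 := by
    intro i
    have : (1 - Th.transpose).mulVec K = fun i => max (e i + P.transpose.mulVec l i - l i) 0 := by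
      rw [hK, Matrix.mulVec_mulVec, Matrix.mul_nonsing_inv _ hdet, Matrix.one_mulVec]
    have h := congrFun this i
    rw [Matrix.sub_mulVec, Matrix.one_mulVec] at h
    simpa using h
  have hK0 : ∀ i, 0 ≤ K i := by
    intro i
    rw [hK]
    have := mulVec_mono_aux (1 - Th.transpose)⁻¹ hInvNonneg 0
      (fun i => max (e i + P.transpose.mulVec l i - l i) 0) (fun i => le_max_right _ _) i
    simpa using this
  have hKκ : ∀ i, K i ≤ κ := by
    intro i
    rw [hκ]
    exact le_ciSup (Set.finite_range K).bddAbove i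
  have hκ0 : 0 ≤ κ := (hK0 ⟨0, by omega⟩).trans (hKκ _)
  have hVK : ∀ p V : Fin N → ℝ, (∀ i, p i ≤ l i) → (∀ i, 0 ≤ V i) →
      (∀ i, V i ≤ max (x p V i - l i) 0) → ∀ i, V i ≤ K i := by
    intro p V hp hV h i
    have h1 : ∀ j, (1 - Th.transpose).mulVec V j ≤
        max (e j + P.transpose.mulVec l j - l j) 0 := by
      intro j
      rw [Matrix.sub_mulVec, Matrix.one_mulVec, Pi.sub_apply]
      have a1 := h j
      rw [← hx] at a1
      have a2 := mP p l hp j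
      have a3 := mT 0 V hV j
      rw [Matrix.mulVec_zero, Pi.zero_apply] at a3
      rcases max_cases (e j + P.transpose.mulVec p j + Th.transpose.mulVec V j - l j) 0 with h | h
      · linarith [le_max_left (e j + P.transpose.mulVec l j - l j) 0]
      · linarith [le_max_right (e j + P.transpose.mulVec l j - l j) 0]
    have h2 := mulVec_mono_aux _ hInvNonneg _ _ h1 i
    rwa [← hK, Matrix.mulVec_mulVec, Matrix.nonsing_inv_mul _ hdet, Matrix.one_mulVec] at h2
  have hXκ : ∀ p V : Fin N → ℝ, (∀ i, p i ≤ l i) → (∀ i, V i ≤ K i) →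
      ∀ i, x p V i - l i ≤ κ := by
    intro p V hp hV i
    rw [← hx]
    linarith [mP p l hp i, mT V K hV i, hKeq i, hKκ i,
      le_max_left (e i + P.transpose.mulVec l i - l i) 0]
  simp only [hx, hy] at hAdm2 hGp hF ⊢
  have hMin : ∀ a p V : Fin N → ℝ, Adm2 a p V → (∀ i, a i ≤ acheck i) →
      (∀ i, p i ≤ pcheck i) → (∀ i, V i ≤ Vcheck i) →
      ∀ i, a i = acheck i ∧ p i = pcheck i ∧ V i = Vcheck i := by
    intro a p V h ha hp hV
    have := hOpt a p V h
    rw [hf] at this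
    exact eq_of_weighted_aux f₁ f₂ f₃ _ _ _ _ _ _ hf₁ hf₂ hf₃ ha hp hV this
  obtain ⟨c1, ⟨c2, c3⟩, c4, c5, c6, c7, c8⟩ := (hAdm2 _ _ _).1 hAdm
  generalize acheck = a at *
  generalize pcheck = p at *
  generalize Vcheck = V at *
  have hY0 := y0 p V c2 c4
  have key : ∀ i, (if y p V i ≤ l i then 0 else a i) = a i ∧
      (if a i = 0 then y p V i else p i) = p i ∧
      max (x p V i - l i - κ * (1 - a i)) 0 = V i := by
    have hp' : ∀ i, (if a i = 0 then y p V i else p i) ≤ p i := by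
      intro i
      split_ifs with h
      · simpa [h] using c5 i
      · exact le_rfl
    have hV' : ∀ i, max (x p V i - l i - κ * (1 - a i)) 0 ≤ V i :=
      fun i => max_le (c8 i) (c4 i)
    have hyy := my _ _ p V hp' hV'
    have hxx := mx _ _ p V hp' hV'
    refine hMin (fun i => if y p V i ≤ l i then 0 else a i)
      (fun i => if a i = 0 then y p V i else p i)
      (fun i => max (x p V i - l i - κ * (1 - a i)) 0) ((hAdm2 _ _ _).2 ?_) ?_ hp' hV'
    · refine ⟨?_, ⟨?_, fun i => (hp' i).trans (c3 i)⟩, fun i => le_max_right _ _, ?_, ?_, ?_, ?_⟩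
      · intro i
        have := c1 i
        try dsimp only
        split_ifs <;> simp [this]
      · intro i
        have h1 := hY0 i
        have h2 : 0 ≤ p i := c2 i
        try dsimp only [Pi.zero_apply]
        split_ifs <;> assumption
      all_goals
        intro i
        have b0 := hyy i
        have b1 := hxx i
        have b2 := c3 i
        have b5 := c5 i
        have b6 := c6 i
        have b7 := c7 i
        have b9 := hl i
        have b10 := hY0 i
        have bm := le_max_left (x p V i - l i - κ * (1 - a i)) 0
        try dsimp only
        simp only [Pi.zero_apply] at b9
        rcases c1 i with h | h <;> simp only [h] at * <;> split_ifs at * <;> linarith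
    · intro i
      try dsimp only
      split_ifs
      · rcases c1 i with h | h <;> simp [h]
      · exact le_rfl
  have hV1 : ∀ i, V i ≤ max (x p V i - l i) 0 := by
    intro i
    rw [← (key i).2.2]
    apply max_le_max _ le_rfl
    rcases c1 i with h | h <;> rw [h] <;> linarith
  have hVK1 := hVK p V c3 c4 hV1
  have hXκ1 := hXκ p V c3 hVK1
  -- description of the optimum by the value of `a`
  have ha0 : ∀ i, a i = 0 → y p V i ≤ l i ∧ p i = y p V i ∧ V i = 0 := by
    intro i h
    obtain ⟨-, k2, k3⟩ := key i
    have b7 := c7 i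
    simp only [h, if_true] at *
    refine ⟨by linarith, k2.symm, ?_⟩
    rw [← k3]
    exact max_eq_right (by linarith [hXκ1 i])
  have ha1 : ∀ i, a i = 1 → l i < y p V i ∧ p i = l i ∧ V i = max (x p V i - l i) 0 := by
    intro i h
    obtain ⟨k1, -, k3⟩ := key i
    have b6 := c6 i
    simp only [h] at *
    refine ⟨?_, le_antisymm (c3 i) (by linarith), ?_⟩
    · by_contra hc
      rw [if_pos (not_lt.1 hc)] at k1
      exact zero_ne_one k1
    · rw [← k3]; simp
  have R1 : ∀ j, p j = min (y p V j) (l j) := by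
    intro j
    rcases c1 j with h | h
    · obtain ⟨h1, h2, -⟩ := ha0 j h
      rw [min_eq_left h1]; exact h2
    · obtain ⟨h1, h2, -⟩ := ha1 j h
      rw [min_eq_right h1.le]; exact h2
  have R2 : ∀ j, V j = max (x p V j - l j) 0 * (if l j < y p V j then (1:ℝ) else 0) := by
    intro j
    rcases c1 j with h | h
    · obtain ⟨h1, -, h2⟩ := ha0 j h
      rw [if_neg (not_lt.2 h1), mul_zero]; exact h2
    · obtain ⟨h1, -, h2⟩ := ha1 j h
      rw [if_pos h1, mul_one]; exact h2
  have hle : p ≤ plow := by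
    obtain ⟨⟨q0, ql⟩, qF, -⟩ := hplow
    have hW := (hH plow ⟨q0, ql⟩).1
    generalize plow = q at q0 ql qF hW ⊢
    obtain ⟨W, hWdef⟩ : ∃ W, W = H q := ⟨_, rfl⟩
    rw [← hWdef] at hW
    have hq1 : ∀ i, q i = min (y q W i) (l i) := by
      intro i
      have := congrFun qF i
      rw [hF] at this
      simpa [← hWdef] using this
    have hW1 : ∀ i, W i = max (x q W i - l i) 0 * (if q i = l i then (1:ℝ) else 0) := by
      intro i
      have := congrFun hW i
      rwa [hGp] at this
    have hW0 : ∀ i, 0 ≤ W i := by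
      intro i
      rw [hW1 i]
      exact mul_nonneg (le_max_right _ _) (by split_ifs <;> norm_num)
    have hW2 : ∀ i, W i ≤ max (x q W i - l i) 0 := by
      intro i
      have h0 := le_max_right (x q W i - l i) 0
      have h1 := hW1 i
      split_ifs at h1 <;> linarith
    have hXκ2 := hXκ q W ql (hVK q W ql hW0 hW2)
    have yp := my (fun i => min (p i) (q i)) (fun i => min (V i) (W i)) p V
      (fun i => min_le_left _ _) (fun i => min_le_left _ _)
    have yq := my (fun i => min (p i) (q i)) (fun i => min (V i) (W i)) q W
      (fun i => min_le_right _ _) (fun i => min_le_right _ _)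
    have xp := mx (fun i => min (p i) (q i)) (fun i => min (V i) (W i)) p V
      (fun i => min_le_left _ _) (fun i => min_le_left _ _)
    have xq := mx (fun i => min (p i) (q i)) (fun i => min (V i) (W i)) q W
      (fun i => min_le_right _ _) (fun i => min_le_right _ _)
    have fin := hMin (fun i => if l i < y q W i then a i else 0) (fun i => min (p i) (q i))
      (fun i => min (V i) (W i)) ((hAdm2 _ _ _).2 ?_) ?_
      (fun i => min_le_left _ _) (fun i => min_le_left _ _)
    · intro i
      rw [← (fin i).2.1]
      exact min_le_right _ _
    · refine ⟨?_, ⟨fun i => le_min (c2 i) (q0 i), fun i => (min_le_left _ _).trans (c3 i)⟩,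
        fun i => le_min (c4 i) (hW0 i), ?_⟩
      · intro i
        have := c1 i
        try dsimp only
        split_ifs <;> simp [this]
      · rw [← forall_and, ← forall_and, ← forall_and]
        intro i
        have b0 := yp i
        have b1 := yq i
        have b2 := xp i
        have b3 := xq i
        have b4 := hXκ1 i
        have b5 := hXκ2 i
        have b6 := c4 i
        have b7 := hW0 i
        have b8 : p i ≤ l i := c3 i
        have b9 : q i ≤ l i := ql i
        have b10 := c7 i
        have b11 := c5 i
        have b12 : 0 ≤ l i := hl i
        simp only [Pi.zero_apply] at b6
        generalize y (fun i => min (p i) (q i)) (fun i => min (V i) (W i)) i = Y' at *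
        generalize x (fun i => min (p i) (q i)) (fun i => min (V i) (W i)) i = X' at *
        try dsimp only
        by_cases hb : l i < y q W i
        · have hql : q i = l i := by rw [hq1 i, min_eq_right hb.le]
          have hWi : x q W i - l i ≤ W i := by
            have := hW1 i
            rw [if_pos hql, mul_one] at this
            rw [this]; exact le_max_left _ _
          rw [if_pos hb]
          rcases c1 i with h | h
          · obtain ⟨d1, d2, d3⟩ := ha0 i h
            simp only [h] at *
            have e1 : min (p i) (q i) = p i := min_eq_left (by linarith)
            have e2 : min (V i) (W i) = 0 := by rw [d3]; exact min_eq_left b7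
            have e3 : 0 ≤ p i := c2 i
            rw [e1, e2]
            refine ⟨by linarith, by linarith, by linarith, by linarith⟩
          · obtain ⟨d1, d2, d3⟩ := ha1 i h
            have d4 := le_max_left (x p V i - l i) 0
            rw [← d3] at d4
            have e1 : min (p i) (q i) = l i := by rw [d2, hql, min_self]
            have e2 : X' - l i ≤ min (V i) (W i) := le_min (by linarith) (by linarith)
            rw [e1]
            simp only [h] at *
            refine ⟨by linarith, by linarith, by linarith, by linarith⟩
        · have hb' := not_lt.1 hb
          have hqy : q i = y q W i := by rw [hq1 i, min_eq_left hb']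
          have e0 : Y' ≤ p i := by
            rw [R1 i]; exact le_min b0 (by linarith)
          have e1 : Y' ≤ min (p i) (q i) := le_min e0 (by linarith)
          have e2 : 0 ≤ min (V i) (W i) := le_min b6 b7
          have e3 : 0 ≤ min (p i) (q i) := le_min (c2 i) (q0 i)
          rw [if_neg hb]
          refine ⟨by linarith, by linarith, by linarith, by linarith⟩
    · intro i
      try dsimp only
      split_ifs
      · exact le_rfl
      · rcases c1 i with h | h <;> simp [h]
  refine ⟨funext R1, funext R2, hle, ?_⟩
  · intro hne
    obtain ⟨⟨q0, ql⟩, qF, qmin⟩ := hplow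
    have hiff : ∀ j, p j = l j ↔ l j < y p V j := by
      intro j
      rw [R1 j, min_eq_right_iff]
      exact ⟨fun h => lt_of_le_of_ne h (hne j).symm, le_of_lt⟩
    have hVH : V = H p := by
      apply (hH p ⟨c2, c3⟩).2
      rw [hGp]
      funext j
      simp only [hiff]
      exact R2 j
    apply le_antisymm hle
    apply qmin p ⟨c2, c3⟩
    rw [hF]
    funext j
    simpa [← hVH] using R1 j
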